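/- For every z > −1 and every k < n, the roots in x of ∂_z^{k+1} L_n(x,z) strictly interlace the roots of ∂_z^k L_n(x,z): between any two consecutive real roots of ∂_z^k L_n(·,z) there lies exactly one root of ∂_z^{k+1} L_n(·,z), and all roots of ∂_z^{k+1} L_n(·,z) arise this way. -/

import Mathlib

open Polynomial Finset

/-- The generalized Laguerre polynomial as a bivariate polynomial: the outer variable is
the parameter z, the inner coefficients are polynomials in x. -/
noncomputable def laguerreBiv (n : Nat) : Polynomial (Polynomial Real) :=
  Finset.sum (Finset.range (n + 1)) fun k =>
    Polynomial.C (Polynomial.C ((-1 : Real) ^ k / ((k.factorial : Real) * ((n - k).factorial : Real))) *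
        Polynomial.X ^ k) *
      Finset.prod (Finset.Icc (k + 1) n) fun j =>
        (Polynomial.X + Polynomial.C (Polynomial.C (j : Real)))

/-- The k-th derivative in the parameter z of the Laguerre polynomial, specialized at a
real value z, as a polynomial in x. -/
noncomputable def laguerreDz (n k : Nat) (z : Real) : Polynomial Real :=
  (Polynomial.derivative^[k] (laguerreBiv n)).eval (Polynomial.C z)

/-!
For fixed `x > 0`, the Laguerre polynomial is, up to a constant and a translation, a Charlier
polynomial in `z`. The three-term recurrence makes the Charlier polynomials a Sturm chain, so all
roots in `z` are real and simple, and Laguerre's inequality `p'² > p p''` for the `z`-derivatives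
shows that `∂_z^k L` and `∂_z^(k+2) L` have opposite signs wherever `∂_z^(k+1) L` vanishes. Read as
a statement about the roots in `x` for fixed `z > -1`, which are positive because the coefficients
alternate in sign, this says that the `z`-derivatives of `L` form a Sturm chain in `x`, and
consecutive members of a Sturm chain interlace.
-/

section RootEnumeration

/-- `a 0 > a 1 > ⋯` lists the roots of `p`, and there are `p.natDegree` of them: `p` has only real
simple roots. The values of `a` from index `p.natDegree` on carry no information. -/
structure IsRootEnum (p : ℝ[X]) (a : ℕ → ℝ) : Prop where
  roots_eq : p.roots = (Multiset.range p.natDegree).map a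
  strictAntiOn : StrictAntiOn a (Set.Iio p.natDegree)

/-- The roots of `q` lie strictly between consecutive roots of `p`, in the sense of
`a 0 > b 0 > a 1 > b 1 > ⋯`. Meant for `p.natDegree = q.natDegree + 1`. -/
def StrictlyInterlaces (q p : ℝ[X]) : Prop :=
  ∃ a b : ℕ → ℝ, IsRootEnum p a ∧ IsRootEnum q b ∧
    ∀ i < q.natDegree, b i < a i ∧ a (i + 1) < b i

variable {p : ℝ[X]} {a e : ℕ → ℝ} {m : ℕ}

theorem neg_one_pow_mul_prod_range_pos {R : Type*} [CommRing R] [LinearOrder R]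
    [IsStrictOrderedRing R] {u : ℕ → R} {i m : ℕ} (him : i ≤ m) (hneg : ∀ l < i, u l < 0)
    (hpos : ∀ l, i ≤ l → l < m → 0 < u l) : 0 < (-1) ^ i * ∏ l ∈ range m, u l := by
  have hlow : 0 < ∏ l ∈ range i, -u l :=
    prod_pos fun l hl ↦ neg_pos.2 (hneg l (mem_range.1 hl))
  have hhigh : 0 < ∏ l ∈ Ico i m, u l :=
    prod_pos fun l hl ↦ hpos l (mem_Ico.1 hl).1 (mem_Ico.1 hl).2
  rw [prod_neg, card_range] at hlow
  rw [← prod_range_mul_prod_Ico u him, ← mul_assoc]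
  exact mul_pos hlow hhigh

namespace IsRootEnum

theorem isRoot (h : IsRootEnum p a) {i : ℕ} (hi : i < p.natDegree) : p.IsRoot (a i) := by
  have hmem : a i ∈ p.roots := by
    rw [h.roots_eq]
    exact Multiset.mem_map_of_mem a (Multiset.mem_range.2 hi)
  exact isRoot_of_mem_roots hmem

theorem splits (h : IsRootEnum p a) : p.Splits :=
  splits_iff_card_roots.2 (by simp [h.roots_eq])

theorem nodup_roots (h : IsRootEnum p a) : p.roots.Nodup := by
  rw [h.roots_eq]
  refine (Multiset.nodup_range _).map_on fun i hi j hj ↦ h.strictAntiOn.injOn ?_ ?_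
  exacts [Multiset.mem_range.1 hi, Multiset.mem_range.1 hj]

theorem neg_one_pow_mul_eval_pos (h : IsRootEnum p a) (hp : p ≠ 0) {i : ℕ} {x : ℝ}
    (hi : i ≤ p.natDegree) (habove : ∀ l < i, x < a l)
    (hbelow : ∀ l, i ≤ l → l < p.natDegree → a l < x) :
    0 < (-1) ^ i * (p.leadingCoeff * p.eval x) := by
  have heval : p.eval x = p.leadingCoeff * ∏ l ∈ range p.natDegree, (x - a l) := by
    rw [h.splits.eval_eq_prod_roots, h.roots_eq, Multiset.map_map]
    rfl
  have hprod := neg_one_pow_mul_prod_range_pos hi (fun l hl ↦ sub_neg.2 (habove l hl))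
    (fun l hil hl ↦ sub_pos.2 (hbelow l hil hl))
  have hlead : 0 < p.leadingCoeff ^ 2 := by
    have := leadingCoeff_ne_zero.2 hp
    positivity
  calc 0 < p.leadingCoeff ^ 2 * ((-1) ^ i * ∏ l ∈ range p.natDegree, (x - a l)) :=
        mul_pos hlead hprod
    _ = (-1) ^ i * (p.leadingCoeff * p.eval x) := by rw [heval]; ring

end IsRootEnum

theorem exists_isRoot_Ioo_of_eval_mul_eval_neg {x y : ℝ} (hxy : x ≤ y)
    (h : p.eval x * p.eval y < 0) : ∃ c ∈ Set.Ioo x y, p.IsRoot c := by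
  have hzero : (0 : ℝ) ∈ Set.uIcc (p.eval x) (p.eval y) := by
    rw [Set.mem_uIcc]
    rcases mul_neg_iff.1 h with h | h
    exacts [.inr ⟨h.2.le, h.1.le⟩, .inl ⟨h.1.le, h.2.le⟩]
  obtain ⟨c, hc, hpc⟩ := intermediate_value_uIcc p.continuousOn hzero
  rw [Set.uIcc_of_le hxy] at hc
  refine ⟨c, ⟨hc.1.lt_of_ne ?_, hc.2.lt_of_ne ?_⟩, hpc⟩ <;> rintro rfl <;> simp [hpc] at h

theorem isRootEnum_of_isRoot (ha : StrictAntiOn a (Set.Iio p.natDegree))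
    (hroot : ∀ i < p.natDegree, p.IsRoot (a i)) : IsRootEnum p a := by
  refine ⟨(Multiset.eq_of_le_of_card_le ?_ ?_).symm, ha⟩
  · refine (Multiset.le_iff_subset <| (Multiset.nodup_range _).map_on fun i hi j hj ↦
      ha.injOn (Multiset.mem_range.1 hi) (Multiset.mem_range.1 hj)).2 fun y hy ↦ ?_
    obtain ⟨i, hi, rfl⟩ := Multiset.mem_map.1 hy
    have hi : i < p.natDegree := Multiset.mem_range.1 hi
    exact (mem_roots (ne_zero_of_natDegree_gt hi)).2 (hroot i hi)
  · simpa using card_roots' p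

theorem exists_isRootEnum_of_eval_mul_eval_neg (he : ∀ i < p.natDegree, e (i + 1) < e i)
    (hsign : ∀ i < p.natDegree, p.eval (e (i + 1)) * p.eval (e i) < 0) :
    ∃ a, IsRootEnum p a ∧ ∀ i < p.natDegree, e (i + 1) < a i ∧ a i < e i := by
  have hroot (i : ℕ) : ∃ c, i < p.natDegree → c ∈ Set.Ioo (e (i + 1)) (e i) ∧ p.IsRoot c := by
    by_cases hi : i < p.natDegree
    · obtain ⟨c, hc⟩ := exists_isRoot_Ioo_of_eval_mul_eval_neg (he i hi).le (hsign i hi)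
      exact ⟨c, fun _ ↦ hc⟩
    · exact ⟨0, fun h ↦ absurd h hi⟩
  choose a ha using hroot
  refine ⟨a, isRootEnum_of_isRoot ?_ fun i hi ↦ (ha i hi).2, fun i hi ↦ (ha i hi).1⟩
  exact strictAntiOn_of_add_one_lt Set.ordConnected_Iio fun i _ hi hi' ↦
    (ha (i + 1) hi').1.2.trans (ha i hi).1.1

theorem exists_gt_leadingCoeff_mul_eval_pos (hp : p ≠ 0) (B : ℝ) :
    ∃ M > B, 0 < p.leadingCoeff * p.eval M := by
  have hroots : ∀ᶠ M : ℝ in Filter.atTop, ∀ y ∈ p.roots.toFinset, y < M :=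
    (Filter.eventually_all_finset _).2 fun y _ ↦ Filter.eventually_gt_atTop y
  obtain ⟨M, hM, hBM⟩ := (hroots.and (Filter.eventually_gt_atTop B)).exists
  have := zero_lt_eval_of_roots_lt_of_leadingCoeff_nonneg (P := C p.leadingCoeff * p) (x := M)
    (fun y hy ↦ hM y (by simpa [hp] using hy)) (by simpa using mul_self_nonneg _)
  exact ⟨M, hBM, by simpa using this⟩

theorem exists_lt_leadingCoeff_mul_eval_pos (hp : p ≠ 0) (B : ℝ) :
    ∃ M < B, 0 < (-1) ^ p.natDegree * (p.leadingCoeff * p.eval M) := by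
  have hp' : p.comp (-X) ≠ 0 := by simpa [comp_eq_zero_iff] using hp
  obtain ⟨M, hM, hpos⟩ := exists_gt_leadingCoeff_mul_eval_pos hp' (-B)
  refine ⟨-M, neg_lt.1 hM, ?_⟩
  rw [leadingCoeff_comp (by simp)] at hpos
  simpa [mul_comm, mul_left_comm, mul_assoc] using hpos

theorem neg_of_neg_one_pow_mul_pos {R : Type*} [CommRing R] [LinearOrder R]
    [IsStrictOrderedRing R] {s x y : R} {i : ℕ} (hx : 0 < (-1) ^ i * (s * x))
    (hy : 0 < (-1) ^ (i + 1) * (s * y)) : x * y < 0 := by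
  have hsq : ((-1 : R) ^ i) ^ 2 = 1 := by simp [← pow_mul]
  have hprod : 0 < s ^ 2 * -(x * y) := by
    calc 0 < (-1) ^ i * (s * x) * ((-1) ^ (i + 1) * (s * y)) := mul_pos hx hy
      _ = s ^ 2 * -(x * y) := by linear_combination -(s ^ 2 * (x * y)) * hsq
  exact neg_pos.1 (pos_of_mul_pos_right hprod (sq_nonneg s))

theorem exists_isRootEnum_of_neg_one_pow_mul_eval_pos (hdeg : p.natDegree = m + 1)
    (ha : StrictAntiOn a (Set.Iio m))
    (hsign : ∀ i < m, 0 < (-1) ^ (i + 1) * (p.leadingCoeff * p.eval (a i))) :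
    ∃ b, IsRootEnum p b ∧ ∀ i < m, a i < b i ∧ b (i + 1) < a i := by
  have hp : p ≠ 0 := ne_zero_of_natDegree_gt (n := 0) (by lia)
  obtain ⟨M, hM, hMpos⟩ := exists_gt_leadingCoeff_mul_eval_pos hp (a 0)
  obtain ⟨M', hM', hMpos'⟩ := exists_lt_leadingCoeff_mul_eval_pos hp (min M (a (m - 1)))
  -- The test points `M > a 0 > ⋯ > a (m - 1) > M'`, at which the sign of `p` alternates.
  let e : ℕ → ℝ
    | 0 => M
    | i + 1 => if i < m then a i else M'
  have he (i : ℕ) (hi : i < m + 1) : e (i + 1) < e i := by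
    rcases i with _ | i
    · grind
    · have := @ha i (show i < m by lia) (i + 1)
      grind
  have hpos (i : ℕ) (hi : i ≤ m + 1) : 0 < (-1) ^ i * (p.leadingCoeff * p.eval (e i)) := by
    rcases i with _ | i
    · simpa [e] using hMpos
    · by_cases him : i < m
      · simpa [e, him] using hsign i him
      · obtain rfl : i = m := by lia
        simpa [e, hdeg] using hMpos'
  obtain ⟨b, hb, hbe⟩ := exists_isRootEnum_of_eval_mul_eval_neg (p := p) (e := e)
    (by simpa [hdeg] using he) (fun i hi ↦ by
      rw [mul_comm]
      exact neg_of_neg_one_pow_mul_pos (hpos i (by lia)) (hpos (i + 1) (by lia)))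
  refine ⟨b, hb, fun i hi ↦ ⟨?_, ?_⟩⟩
  · simpa [e, hi] using (hbe i (by lia)).1
  · simpa [e, hi] using (hbe (i + 1) (by lia)).2

end RootEnumeration

section SturmChain

/-- A Sturm chain on the whole real line, with `P j` of degree `j`: wherever `P (j + 1)` vanishes,
its two neighbours have opposite signs, while their leading coefficients have the same sign. -/
structure IsSturmChain (P : ℕ → ℝ[X]) (N : ℕ) : Prop where
  natDegree_eq : ∀ j ≤ N, (P j).natDegree = j
  leadingCoeff_mul_pos : ∀ j, j + 2 ≤ N → 0 < (P j).leadingCoeff * (P (j + 2)).leadingCoeff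
  eval_mul_neg : ∀ j, j + 2 ≤ N → ∀ x, (P (j + 1)).IsRoot x →
    (P j).eval x * (P (j + 2)).eval x < 0

/-- Exactly `i` roots of `q` lie above the `i`-th root of `p`, which fixes the sign of `q`, hence
of `r`, there. -/
theorem StrictlyInterlaces.of_eval_mul_eval_neg {p q r : ℝ[X]} (hqp : StrictlyInterlaces q p)
    (hp : p.natDegree = q.natDegree + 1) (hr : r.natDegree = p.natDegree + 1)
    (hlead : 0 < q.leadingCoeff * r.leadingCoeff)
    (hneg : ∀ x, p.IsRoot x → q.eval x * r.eval x < 0) : StrictlyInterlaces p r := by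
  obtain ⟨a, b, ha, hb, hab⟩ := hqp
  have hq : q ≠ 0 := by rintro rfl; simp at hlead
  have hanti {i l : ℕ} (hil : i ≤ l) (hl : l < p.natDegree) : a l ≤ a i :=
    ha.strictAntiOn.antitoneOn (hil.trans_lt hl) hl hil
  have hqsign (i : ℕ) (hi : i < p.natDegree) :
      0 < (-1) ^ i * (q.leadingCoeff * q.eval (a i)) :=
    hb.neg_one_pow_mul_eval_pos hq (by lia)
      (fun l hl ↦ (hanti hl hi).trans_lt (hab l (by lia)).2)
      (fun l hil hl ↦ (hab l hl).1.trans_le (hanti hil (by lia)))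
  have hrsign (i : ℕ) (hi : i < p.natDegree) :
      0 < (-1) ^ (i + 1) * (r.leadingCoeff * r.eval (a i)) := by
    have hqr := mul_pos hlead (neg_pos.2 (hneg (a i) (ha.isRoot hi)))
    have hsq : ((-1 : ℝ) ^ i) ^ 2 = 1 := by simp [← pow_mul]
    refine pos_of_mul_pos_right ?_ (hqsign i hi).le
    linear_combination hqr + (q.leadingCoeff * r.leadingCoeff * (q.eval (a i) * r.eval (a i))) * hsq
  obtain ⟨c, hc, hca⟩ :=
    exists_isRootEnum_of_neg_one_pow_mul_eval_pos hr ha.strictAntiOn hrsign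
  exact ⟨c, a, hc, ha, hca⟩

theorem IsSturmChain.strictlyInterlaces {P : ℕ → ℝ[X]} {N j : ℕ} (h : IsSturmChain P N)
    (hj : j + 1 ≤ N) : StrictlyInterlaces (P j) (P (j + 1)) := by
  induction j with
  | zero =>
    have hdeg₀ := h.natDegree_eq 0 (by lia)
    have hP₀ : IsRootEnum (P 0) 0 :=
      isRootEnum_of_isRoot (by simp [hdeg₀, StrictAntiOn]) (by simp [hdeg₀])
    obtain ⟨a, ha, -⟩ := exists_isRootEnum_of_neg_one_pow_mul_eval_pos (a := 0)
      (h.natDegree_eq 1 hj) (by simp [StrictAntiOn]) (by simp)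
    exact ⟨a, 0, ha, hP₀, by simp [hdeg₀]⟩
  | succ j ih =>
    refine (ih (by lia)).of_eval_mul_eval_neg ?_ ?_ (h.leadingCoeff_mul_pos j hj)
      (h.eval_mul_neg j hj)
    all_goals simp only [h.natDegree_eq, hj, show j ≤ N by lia, show j + 1 ≤ N by lia]

end SturmChain

section LaguerreInequality

/-- The Laguerre expression `p'² - p p''`, nonnegative for real-rooted `p`: it is `-p² (log p)''`. -/
noncomputable def laguerreExpr {R : Type*} [CommRing R] (p : R[X]) : R[X] :=
  derivative p ^ 2 - p * derivative (derivative p)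

theorem laguerreExpr_mul {R : Type*} [CommRing R] (p q : R[X]) :
    laguerreExpr (p * q) = laguerreExpr p * q ^ 2 + p ^ 2 * laguerreExpr q := by
  simp only [laguerreExpr, derivative_mul, derivative_add]
  ring

theorem eval_laguerreExpr_nonneg {R : Type*} [CommRing R] [LinearOrder R] [IsStrictOrderedRing R]
    {p : R[X]} (hp : p.Splits) (c : R) : 0 ≤ (laguerreExpr p).eval c := by
  induction hp using Submonoid.closure_induction with
  | mem p hp => rcases hp with ⟨a, rfl⟩ | ⟨a, rfl⟩ <;> simp [laguerreExpr]
  | one => simp [laguerreExpr]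
  | mul p q _ _ hp hq =>
    rw [laguerreExpr_mul, eval_add, eval_mul, eval_mul, eval_pow, eval_pow]
    positivity

theorem eval_laguerreExpr_pos {R : Type*} [Field R] [LinearOrder R] [IsStrictOrderedRing R]
    {p : R[X]} (hp : p.Splits) (hdeg : 0 < p.natDegree) {c : R} (hc : p.eval c ≠ 0) :
    0 < (laguerreExpr p).eval c := by
  obtain ⟨a, ha⟩ := hp.exists_eval_eq_zero (natDegree_pos_iff_degree_pos.1 hdeg).ne'
  obtain ⟨q, rfl⟩ := dvd_iff_isRoot.2 ha
  have hq : 0 ≤ (laguerreExpr q).eval c :=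
    eval_laguerreExpr_nonneg (splits_X_sub_C_mul_iff.1 hp) c
  have hqc : q.eval c ≠ 0 := fun h ↦ hc (by simp [h])
  have hlin : laguerreExpr (X - C a) = 1 := by simp [laguerreExpr]
  rw [laguerreExpr_mul, hlin, one_mul, eval_add, eval_mul, eval_pow, eval_pow]
  positivity

end LaguerreInequality

section SimpleRealRoots

/-- All complex roots of `p` are real and simple. -/
structure HasSimpleRealRoots (p : ℝ[X]) : Prop where
  splits : p.Splits
  eval_derivative_ne_zero : ∀ c, p.IsRoot c → (derivative p).eval c ≠ 0

variable {p : ℝ[X]} {a : ℕ → ℝ} {c : ℝ} {k : ℕ}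

theorem IsRootEnum.hasSimpleRealRoots (h : IsRootEnum p a) (hp : p ≠ 0) :
    HasSimpleRealRoots p := by
  refine ⟨h.splits, fun c hc hc' ↦ ?_⟩
  have hcount := Multiset.nodup_iff_count_le_one.1 h.nodup_roots c
  rw [count_roots] at hcount
  exact hcount.not_gt ((one_lt_rootMultiplicity_iff_isRoot hp).2 ⟨hc, hc'⟩)

theorem splits_derivative (hp : p.Splits) : (derivative p).Splits := by
  rw [splits_iff_card_roots] at hp ⊢
  have hrolle := p.card_roots_le_derivative
  have hcard := card_roots' (derivative p)
  have hdeg := natDegree_derivative_le p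
  lia

theorem natDegree_iterate_derivative_eq {R : Type*} [Semiring R] [IsAddTorsionFree R] (p : R[X])
    (k : ℕ) : (derivative^[k] p).natDegree = p.natDegree - k := by
  induction k with
  | zero => rfl
  | succ k ih => rw [Function.iterate_succ_apply', natDegree_derivative, ih, Nat.sub_sub]

namespace HasSimpleRealRoots

theorem eval_mul_eval_derivative_derivative_neg (h : HasSimpleRealRoots p) (hdeg : 0 < p.natDegree)
    (hc : (derivative p).IsRoot c) : p.eval c * (derivative (derivative p)).eval c < 0 := by
  have hpc : p.eval c ≠ 0 := fun hpc ↦ h.eval_derivative_ne_zero c hpc hc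
  simpa [laguerreExpr, hc.eq_zero] using eval_laguerreExpr_pos h.splits hdeg hpc

protected theorem derivative (h : HasSimpleRealRoots p) (hdeg : 0 < p.natDegree) :
    HasSimpleRealRoots (derivative p) :=
  ⟨splits_derivative h.splits, fun _ hc ↦
    right_ne_zero_of_mul (h.eval_mul_eval_derivative_derivative_neg hdeg hc).ne⟩

theorem iterate_derivative (h : HasSimpleRealRoots p) (hk : k ≤ p.natDegree) :
    HasSimpleRealRoots (derivative^[k] p) := by
  induction k with
  | zero => exact h
  | succ k ih =>
    rw [Function.iterate_succ_apply']
    exact (ih (by lia)).derivative (by rw [natDegree_iterate_derivative_eq]; lia)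

theorem eval_iterate_derivative_mul_neg (h : HasSimpleRealRoots p) (hk : k < p.natDegree)
    (hc : (derivative^[k + 1] p).IsRoot c) :
    (derivative^[k] p).eval c * (derivative^[k + 2] p).eval c < 0 := by
  simp only [Function.iterate_succ_apply'] at hc ⊢
  exact (h.iterate_derivative hk.le).eval_mul_eval_derivative_derivative_neg
    (by rw [natDegree_iterate_derivative_eq]; lia) hc

theorem comp_X_add_C (h : HasSimpleRealRoots p) (r : ℝ) :
    HasSimpleRealRoots (p.comp (X + C r)) :=
  ⟨h.splits.comp_X_add_C r, fun c hc ↦ by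
    simpa [derivative_comp] using h.eval_derivative_ne_zero (c + r) (by simpa using hc)⟩

protected theorem C_mul (h : HasSimpleRealRoots p) {r : ℝ} (hr : r ≠ 0) :
    HasSimpleRealRoots (C r * p) :=
  ⟨(Splits.C r).mul h.splits, fun c hc ↦ by
    have hc' : p.IsRoot c := by simpa [hr] using hc
    simpa [hr] using h.eval_derivative_ne_zero c hc'⟩

end HasSimpleRealRoots

end SimpleRealRoots

section OrderedRing

variable {R : Type*} [CommRing R] [LinearOrder R] [IsStrictOrderedRing R]

theorem pos_of_isRoot_of_neg_one_pow_mul_coeff_pos {p : R[X]} {x : R}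
    (h : ∀ m ≤ p.natDegree, 0 < (-1) ^ m * p.coeff m) (hx : p.IsRoot x) : 0 < x := by
  by_contra! hneg
  refine hx.not_gt ?_
  rw [eval_eq_sum_range]
  refine sum_pos' (fun m hm ↦ ?_) ⟨0, by simp, by simpa using h 0 (Nat.zero_le _)⟩
  have hm' := (h m (by simpa [Nat.lt_succ_iff] using hm)).le
  calc 0 ≤ (-1) ^ m * p.coeff m * (-x) ^ m := mul_nonneg hm' (pow_nonneg (neg_nonneg.2 hneg) m)
    _ = p.coeff m * x ^ m := by rw [mul_right_comm, ← mul_pow, neg_one_mul, neg_neg, mul_comm]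

theorem eval_iterate_derivative_prod_X_sub_C_pos {S : Finset R} {z : R} {k : ℕ}
    (hz : ∀ s ∈ S, s < z) (hk : k ≤ #S) : 0 < (derivative^[k] (∏ s ∈ S, (X - C s))).eval z := by
  have hsum : 0 < ∑ T ∈ S.powersetCard (#S - k), ∏ s ∈ T, (z - s) :=
    sum_pos (fun T hT ↦ prod_pos fun s hs ↦ sub_pos.2 (hz s ((mem_powersetCard.1 hT).1 hs)))
      (powersetCard_nonempty_of_le (Nat.sub_le _ _))
  rw [iterate_derivative_prod_X_sub_C hk]
  simp only [eval_mul, eval_natCast, eval_finsetSum, eval_prod, eval_sub, eval_X, eval_C]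
  positivity

end OrderedRing

section Charlier

variable {R : Type*} [CommRing R]

/-- The umbral map `X ^ j ↦ X (X - 1) ⋯ (X - j + 1)`, through which the Charlier polynomials
inherit the algebra of the powers of `X - C x`. -/
noncomputable def fallingFactorialMap (R : Type*) [CommRing R] : R[X] →ₗ[R] R[X] :=
  (basisMonomials R).constr R (descPochhammer R)

theorem fallingFactorialMap_X_pow (j : ℕ) :
    fallingFactorialMap R (X ^ j) = descPochhammer R j := by
  simpa [fallingFactorialMap, X_pow_eq_monomial] using
    (basisMonomials R).constr_basis R (descPochhammer R) j

theorem fallingFactorialMap_C_mul (a : R) (p : R[X]) :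
    fallingFactorialMap R (C a * p) = C a * fallingFactorialMap R p := by
  simp only [← smul_eq_C_mul, map_smul]

theorem fallingFactorialMap_X_mul (p : R[X]) : fallingFactorialMap R (X * p) =
    X * fallingFactorialMap R p - fallingFactorialMap R (X * derivative p) := by
  induction p using Polynomial.induction_on' with
  | add p q hp hq => simp only [mul_add, map_add, hp, hq]; ring
  | monomial j a =>
    have hX : X * derivative (X ^ j : R[X]) = C (j : R) * X ^ j := by
      rcases j with _ | j
      · simp
      · rw [derivative_X_pow, Nat.add_sub_cancel]; ring
    rw [← C_mul_X_pow_eq_monomial, derivative_C_mul, mul_left_comm, mul_left_comm X, hX,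
      ← pow_succ']
    simp only [fallingFactorialMap_C_mul, fallingFactorialMap_X_pow]
    rw [descPochhammer_succ_right, C_eq_natCast]
    ring

/-- The monic Charlier polynomials with parameter `x`, `∑ i, (n choose i) (-x) ^ i (X)ₙ₋ᵢ`. -/
noncomputable def charlier (x : R) (n : ℕ) : R[X] :=
  fallingFactorialMap R ((X - C x) ^ n)

variable (x : R)

theorem charlier_zero : charlier x 0 = 1 := by
  simpa [charlier] using fallingFactorialMap_X_pow (R := R) 0

theorem charlier_one : charlier x 1 = X - C x := by
  have hX := fallingFactorialMap_X_pow (R := R) 1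
  have hC := fallingFactorialMap_C_mul x (X ^ 0)
  rw [fallingFactorialMap_X_pow] at hC
  simp_all [charlier]

theorem charlier_add_two (n : ℕ) : charlier x (n + 2) =
    (X - C (n + 1 + x)) * charlier x (n + 1) - C ((n + 1) * x) * charlier x n := by
  have hpow : (X - C x) ^ (n + 2) = X * (X - C x) ^ (n + 1) - C x * (X - C x) ^ (n + 1) := by ring
  have hderiv : X * derivative ((X - C x) ^ (n + 1)) =
      C (n + 1 : R) * ((X - C x) ^ (n + 1) + C x * (X - C x) ^ n) := by
    rw [derivative_X_sub_C_pow, Nat.add_sub_cancel, Nat.cast_succ]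
    ring
  rw [charlier, hpow, map_sub, fallingFactorialMap_X_mul, hderiv,
    fallingFactorialMap_C_mul, fallingFactorialMap_C_mul]
  simp only [charlier, fallingFactorialMap_C_mul, map_add, C_mul]
  ring

theorem charlier_eq_sum (n : ℕ) : charlier x n =
    ∑ i ∈ range (n + 1), C ((-x) ^ i * n.choose i) * descPochhammer R (n - i) := by
  rw [charlier, sub_eq_neg_add, ← C_neg, add_pow, map_sum]
  refine sum_congr rfl fun i _ ↦ ?_
  rw [← fallingFactorialMap_X_pow, ← fallingFactorialMap_C_mul, C_mul, C_pow, C_eq_natCast,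
    mul_right_comm]

theorem monic_charlier_and_natDegree_eq [Nontrivial R] (n : ℕ) :
    (charlier x n).Monic ∧ (charlier x n).natDegree = n := by
  induction n using Nat.twoStepInduction with
  | zero => simp [charlier_zero]
  | one => simp [charlier_one, monic_X_sub_C]
  | more n ih ih' =>
    set p := (X - C (n + 1 + x)) * charlier x (n + 1) with hp
    have hmonic : p.Monic := (monic_X_sub_C _).mul ih'.1
    have hdeg : p.natDegree = n + 2 := by
      rw [hp, (monic_X_sub_C _).natDegree_mul ih'.1, natDegree_X_sub_C, ih'.2]
      ring
    have hlt : (C ((n + 1) * x) * charlier x n).natDegree < p.natDegree :=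
      (natDegree_C_mul_le _ _).trans_lt (by lia)
    rw [charlier_add_two]
    exact ⟨hmonic.sub_of_left (degree_lt_degree hlt), by
      rw [natDegree_sub_eq_left_of_natDegree_lt hlt, hdeg]⟩

theorem monic_charlier [Nontrivial R] (n : ℕ) : (charlier x n).Monic :=
  (monic_charlier_and_natDegree_eq x n).1

theorem natDegree_charlier [Nontrivial R] (n : ℕ) : (charlier x n).natDegree = n :=
  (monic_charlier_and_natDegree_eq x n).2

theorem eval_charlier_add_two_of_isRoot {c : R} {n : ℕ} (hc : (charlier x (n + 1)).IsRoot c) :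
    (charlier x (n + 2)).eval c = -((n + 1) * x * (charlier x n).eval c) := by
  simp [charlier_add_two, hc.eq_zero]

theorem eval_charlier_ne_zero_of_isRoot [NoZeroDivisors R] [CharZero R] {x c : R} (hx : x ≠ 0)
    {n : ℕ} (hc : (charlier x (n + 1)).IsRoot c) : (charlier x n).eval c ≠ 0 := by
  induction n with
  | zero => simp [charlier_zero]
  | succ n ih =>
    intro hn
    have hrec := eval_charlier_add_two_of_isRoot x hn
    rw [hc.eq_zero, eq_comm, neg_eq_zero] at hrec
    exact mul_ne_zero (mul_ne_zero n.cast_add_one_ne_zero hx) (ih hn) hrec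

theorem isSturmChain_charlier {x : ℝ} (hx : 0 < x) (N : ℕ) : IsSturmChain (charlier x) N where
  natDegree_eq j _ := natDegree_charlier x j
  leadingCoeff_mul_pos j _ := by
    simp [(monic_charlier x _).leadingCoeff]
  eval_mul_neg j _ c hc := by
    have hne := eval_charlier_ne_zero_of_isRoot hx.ne' hc
    have hpos : 0 < (j + 1) * x * (charlier x j).eval c ^ 2 := by positivity
    rw [eval_charlier_add_two_of_isRoot x hc]
    linarith

theorem hasSimpleRealRoots_charlier {x : ℝ} (hx : 0 < x) (n : ℕ) :
    HasSimpleRealRoots (charlier x n) := by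
  obtain ⟨-, a, -, ha, -⟩ := (isSturmChain_charlier hx (n + 1)).strictlyInterlaces le_rfl
  exact ha.hasSimpleRealRoots (monic_charlier x n).ne_zero

end Charlier

section Laguerre

/-- The coefficient `(X + i + 1) ⋯ (X + n)` of `xⁱ` in `laguerreBiv n`, up to a constant. -/
noncomputable def laguerreFactor (n i : ℕ) : ℝ[X] :=
  ∏ j ∈ Icc (i + 1) n, (X + C (j : ℝ))

variable {n k i m : ℕ} {x z : ℝ}

theorem laguerreFactor_eq_comp (hi : i ≤ n) :
    laguerreFactor n i = (descPochhammer ℝ (n - i)).comp (X + C (n : ℝ)) := by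
  induction n, hi using Nat.le_induction with
  | base => simp [laguerreFactor]
  | succ n hi ih =>
    have hshift : (X - 1 : ℝ[X]).comp (X + C ((n + 1 : ℕ) : ℝ)) = X + C (n : ℝ) := by
      rw [sub_comp, X_comp, one_comp, Nat.cast_succ, C_add, C_1]
      ring
    rw [laguerreFactor, prod_Icc_succ_top (by lia), ← laguerreFactor, ih, Nat.succ_sub hi,
      descPochhammer_succ_left, mul_comp, X_comp, comp_assoc, hshift, mul_comm]

theorem eval_iterate_derivative_laguerreFactor_pos (hz : -1 < z) (h : k + i ≤ n) :
    0 < (derivative^[k] (laguerreFactor n i)).eval z := by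
  have hinj : Function.Injective fun j : ℕ ↦ -(j : ℝ) := fun _ _ ↦ by simp
  have hfactor : laguerreFactor n i =
      ∏ s ∈ (Icc (i + 1) n).map ⟨fun j : ℕ ↦ -(j : ℝ), hinj⟩, (X - C s) := by
    simp [laguerreFactor]
  rw [hfactor]
  refine eval_iterate_derivative_prod_X_sub_C_pos (fun s hs ↦ ?_) ?_
  · obtain ⟨j, hj, rfl⟩ := mem_map.1 hs
    have hj' : (1 : ℝ) ≤ j := by exact_mod_cast (Nat.le_add_left 1 i).trans (mem_Icc.1 hj).1
    simp only [Function.Embedding.coeFn_mk]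
    linarith
  · rw [card_map, Nat.card_Icc]
    lia

theorem natDegree_laguerreFactor : (laguerreFactor n i).natDegree = n - i := by
  rw [laguerreFactor, natDegree_prod_of_monic _ _ fun j _ ↦ monic_X_add_C _]
  simp [-map_natCast]

theorem laguerreDz_eq_sum : laguerreDz n k z = ∑ i ∈ range (n + 1),
    C ((-1) ^ i / (i.factorial * (n - i).factorial) *
      (derivative^[k] (laguerreFactor n i)).eval z) * X ^ i := by
  have hfactor (i : ℕ) : ∏ j ∈ Icc (i + 1) n, (X + C (C (j : ℝ))) = (laguerreFactor n i).map C := by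
    simp [laguerreFactor, Polynomial.map_prod]
  rw [laguerreDz, laguerreBiv, iterate_derivative_sum, eval_finsetSum]
  refine sum_congr rfl fun i _ ↦ ?_
  rw [hfactor, iterate_derivative_C_mul, iterate_derivative_map, eval_mul, eval_C, eval_map_apply,
    C_mul]
  ring

theorem coeff_laguerreDz (hm : m ≤ n) : (laguerreDz n k z).coeff m =
    (-1) ^ m / (m.factorial * (n - m).factorial) *
      (derivative^[k] (laguerreFactor n m)).eval z := by
  simp only [laguerreDz_eq_sum, finsetSum_coeff, coeff_C_mul_X_pow]
  rw [sum_ite_eq, if_pos (mem_range.2 (by lia))]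

theorem neg_one_pow_mul_coeff_laguerreDz_pos (hz : -1 < z) (h : k + m ≤ n) :
    0 < (-1) ^ m * (laguerreDz n k z).coeff m := by
  have hpos := eval_iterate_derivative_laguerreFactor_pos hz h
  rw [coeff_laguerreDz (by lia), ← mul_assoc, ← mul_div_assoc, ← mul_pow, neg_one_mul, neg_neg,
    one_pow]
  positivity

theorem natDegree_laguerreDz (hz : -1 < z) (hk : k ≤ n) : (laguerreDz n k z).natDegree = n - k := by
  refine natDegree_eq_of_le_of_coeff_ne_zero (natDegree_le_iff_coeff_eq_zero.2 fun m hm ↦ ?_)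
    (right_ne_zero_of_mul (neg_one_pow_mul_coeff_laguerreDz_pos hz (by lia)).ne')
  rcases le_or_gt m n with hmn | hmn
  · rw [coeff_laguerreDz hmn, iterate_derivative_eq_zero (by rw [natDegree_laguerreFactor]; lia),
      eval_zero, mul_zero]
  · rw [laguerreDz_eq_sum, finsetSum_coeff]
    refine sum_eq_zero fun i hi ↦ ?_
    rw [coeff_C_mul_X_pow, if_neg (by have := mem_range.1 hi; lia)]

theorem pos_of_isRoot_laguerreDz (hz : -1 < z) (hk : k ≤ n) (hx : (laguerreDz n k z).IsRoot x) :
    0 < x := by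
  refine pos_of_isRoot_of_neg_one_pow_mul_coeff_pos (fun m hm ↦ ?_) hx
  rw [natDegree_laguerreDz hz hk] at hm
  exact neg_one_pow_mul_coeff_laguerreDz_pos hz (by lia)

theorem eval_laguerreDz : (laguerreDz n k z).eval x =
    (derivative^[k] ((laguerreBiv n).map (evalRingHom x))).eval z := by
  rw [iterate_derivative_map, map_evalRingHom_eval, laguerreDz]

theorem map_laguerreBiv (n : ℕ) (x : ℝ) : (laguerreBiv n).map (evalRingHom x) =
    C (1 / n.factorial : ℝ) * (charlier x n).comp (X + C (n : ℝ)) := by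
  rw [laguerreBiv, charlier_eq_sum, Polynomial.map_sum, Polynomial.sum_comp, mul_sum]
  refine sum_congr rfl fun i hi ↦ ?_
  have hin : i ≤ n := Nat.lt_succ_iff.1 (mem_range.1 hi)
  have hcoeff : (-1) ^ i / (i.factorial * (n - i).factorial) * x ^ i =
      1 / n.factorial * ((-x) ^ i * n.choose i) := by
    rw [Nat.cast_choose ℝ hin, neg_pow x]
    field_simp
  rw [mul_comp, C_comp, ← laguerreFactor_eq_comp hin, ← mul_assoc, ← C_mul, ← hcoeff]
  simp [laguerreFactor, Polynomial.map_prod]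

theorem hasSimpleRealRoots_map_laguerreBiv (n : ℕ) (hx : 0 < x) :
    HasSimpleRealRoots ((laguerreBiv n).map (evalRingHom x)) := by
  rw [map_laguerreBiv]
  exact ((hasSimpleRealRoots_charlier hx n).comp_X_add_C n).C_mul (by positivity)

theorem natDegree_map_laguerreBiv (n : ℕ) (x : ℝ) :
    ((laguerreBiv n).map (evalRingHom x)).natDegree = n := by
  rw [map_laguerreBiv, natDegree_C_mul (by positivity), natDegree_comp, natDegree_charlier,
    natDegree_X_add_C, mul_one]

theorem eval_laguerreDz_mul_neg (hk : k + 1 ≤ n) (hx : 0 < x)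
    (hroot : (laguerreDz n (k + 1) z).IsRoot x) :
    (laguerreDz n k z).eval x * (laguerreDz n (k + 2) z).eval x < 0 := by
  rw [IsRoot, eval_laguerreDz] at hroot
  rw [eval_laguerreDz, eval_laguerreDz]
  exact (hasSimpleRealRoots_map_laguerreBiv n hx).eval_iterate_derivative_mul_neg
    (by rwa [natDegree_map_laguerreBiv]) hroot

theorem isSturmChain_laguerreDz (n : ℕ) (hz : -1 < z) :
    IsSturmChain (fun j ↦ laguerreDz n (n - j) z) n where
  natDegree_eq j hj := by rw [natDegree_laguerreDz hz (Nat.sub_le n j), Nat.sub_sub_self hj]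
  leadingCoeff_mul_pos j hj := by
    have hlead (l : ℕ) (hl : l ≤ n) : 0 < (-1) ^ l * (laguerreDz n (n - l) z).leadingCoeff := by
      rw [leadingCoeff, natDegree_laguerreDz hz (Nat.sub_le n l), Nat.sub_sub_self hl]
      exact neg_one_pow_mul_coeff_laguerreDz_pos hz (by lia)
    have hprod := mul_pos (hlead j (by lia)) (hlead (j + 2) hj)
    rw [mul_mul_mul_comm, ← pow_add] at hprod
    simpa [← two_mul, show j + (j + 2) = 2 * (j + 1) by ring] using hprod
  eval_mul_neg j hj x hx := by
    have hk : n - (j + 1) = n - (j + 2) + 1 := by lia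
    have hk' : n - j = n - (j + 2) + 2 := by lia
    have hpos := pos_of_isRoot_laguerreDz hz (Nat.sub_le n (j + 1)) hx
    rw [hk] at hx
    rw [hk', mul_comm]
    exact eval_laguerreDz_mul_neg (by lia) hpos hx

end Laguerre

/-- Strict interlacing: for z > -1 and k < n, there are decreasing enumerations of the
roots of the k-th and (k+1)-st z-derivatives of L_n (in x) such that each root of the
(k+1)-st derivative lies strictly between two consecutive roots of the k-th derivative,
and all roots arise this way. -/
theorem laguerreDz_interlacing (n k : Nat) (hk : k < n) (z : Real) (hz : -1 < z) :
    ∃ a b : Nat → Real,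
      (laguerreDz n k z).roots = (Multiset.range (n - k)).map a ∧
      (laguerreDz n (k + 1) z).roots = (Multiset.range (n - k - 1)).map b ∧
      (∀ i : Nat, i + 1 < n - k → a (i + 1) < a i) ∧
      (∀ i : Nat, i < n - k - 1 → b i < a i ∧ a (i + 1) < b i) := by
  obtain ⟨a, b, ha, hb, hab⟩ :=
    (isSturmChain_laguerreDz n hz).strictlyInterlaces (j := n - k - 1) (by lia)
  have hdeg := natDegree_laguerreDz (n := n) (k := k) hz hk.le
  have hdeg' := natDegree_laguerreDz (n := n) (k := k + 1) hz hk
  simp only [show n - (n - k - 1 + 1) = k by lia, show n - (n - k - 1) = k + 1 by lia]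
    at ha hb hab
  rw [hdeg', Nat.sub_add_eq] at hab
  refine ⟨a, b, hdeg ▸ ha.roots_eq, ?_, fun i hi ↦ ?_, hab⟩
  · rw [hb.roots_eq, hdeg', Nat.sub_add_eq]
  · rw [← hdeg] at hi
    exact ha.strictAntiOn (Nat.lt_of_succ_lt hi) hi (Nat.lt_succ_self i)
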